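/- Let A ⊆ B be an inclusion of C*-algebras. If there exists an intermediate C*-algebra C with A ⊆ C ⊆ B (C a closed *-subalgebra of B containing A) such that C has real rank zero, then the inclusion A ⊆ B has real rank zero. In particular, if either A or B has real rank zero, then the inclusion A ⊆ B has real rank zero. -/

import Mathlib

open Filter Topology

section Defs

variable {B : Type*} [NonUnitalNormedRing B] [StarRing B] [PartialOrder B]

/-- A projection in a C*-algebra: a self-adjoint idempotent. -/
def IsProjection (p : B) : Prop := star p = p ∧ p * p = p

/-- The hereditary subalgebra `cl(a·S·a)`: the norm closure of `{a * b * a : b ∈ S}`. -/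
def herSub (S : Set B) (a : B) : Set B := closure {x : B | ∃ b ∈ S, x = a * b * a}

/-- `T` has an approximate unit of projections. -/
def HasApproxUnitOfProjections (T : Set B) : Prop :=
  ∀ x ∈ T, 0 ≤ x → ∀ ε : ℝ, 0 < ε → ∃ p ∈ T, IsProjection p ∧ ‖p * x - x‖ < ε

/-- The inclusion `A ⊆ S` of C*-algebras has real rank zero. -/
def InclusionRealRankZero (A S : Set B) : Prop :=
  ∀ a ∈ A, 0 ≤ a → a ≠ 0 → HasApproxUnitOfProjections (herSub S a)

end Defs

/-- A C*-subalgebra `C ⊆ B` has real rank zero (as a C*-algebra): every self-adjoint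
element of `C` is a norm limit of self-adjoint elements of `C` having finite spectrum
(computed in the minimal unitization). -/
def SetRealRankZero {B : Type*} [NonUnitalCStarAlgebra B] (C : Set B) : Prop :=
  ∀ a ∈ C, IsSelfAdjoint a → ∀ ε : ℝ, 0 < ε →
    ∃ b ∈ C, IsSelfAdjoint b ∧ (spectrum ℂ (b : Unitization ℂ B)).Finite ∧ ‖a - b‖ ≤ ε

/-!
Approximate a positive `a ∈ A` by a self-adjoint `b` with finite spectrum. The spectral projection
`q` of `b` cutting off the spectrum near `0` almost fixes `b`, and factors as `q = b * k * b` with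
a bound on `‖k‖` that depends only on the cut-off level. Hence `a * k * a` is close to `q` once `b`
is close enough to `a`, so it is almost idempotent, and cutting off its spectrum at `1 / 2` gives a
projection in `cl(aBa)` that is close to `q` and therefore almost fixes `a`.
-/

section NormEstimates

theorem norm_mul_mul_sub_mul_mul_le {R : Type*} [NonUnitalSeminormedRing R] (a b k : R) :
    ‖a * k * a - b * k * b‖ ≤ ‖k‖ * (‖a‖ + ‖b‖) * ‖a - b‖ :=
  calc ‖a * k * a - b * k * b‖ = ‖a * k * (a - b) + (a - b) * k * b‖ := by
        congr 1; noncomm_ring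
    _ ≤ ‖a‖ * ‖k‖ * ‖a - b‖ + ‖a - b‖ * ‖k‖ * ‖b‖ :=
        norm_add_le_of_le norm_mul₃_le norm_mul₃_le
    _ = ‖k‖ * (‖a‖ + ‖b‖) * ‖a - b‖ := by ring

variable {R : Type*} [NonUnitalNormedRing R] [StarRing R] {p q y : R}

theorem isProjection_iff_isStarProjection : IsProjection p ↔ IsStarProjection p := by
  rw [isStarProjection_iff, and_comm]
  rfl

theorem IsProjection.norm_le_one [CStarRing R] (hp : IsProjection p) : ‖p‖ ≤ 1 :=
  (isProjection_iff_isStarProjection.mp hp).norm_le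

theorem IsProjection.norm_mul_self_sub_self_le [CStarRing R] (hq : IsProjection q)
    (hyq : ‖y - q‖ ≤ 1) : ‖y * y - y‖ ≤ 4 * ‖y - q‖ := by
  have hy : ‖y‖ ≤ 2 := by linarith [norm_le_norm_add_norm_sub' y q, hq.norm_le_one]
  have hexpand : y * y - y = y * (y - q) + (y - q) * q - (y - q) := by
    rw [mul_sub, sub_mul, hq.2]
    abel
  calc ‖y * y - y‖ ≤ ‖y * (y - q)‖ + ‖(y - q) * q‖ + ‖y - q‖ := by
        rw [hexpand]
        exact norm_sub_le_of_le (norm_add_le _ _) le_rfl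
    _ ≤ 2 * ‖y - q‖ + ‖y - q‖ * 1 + ‖y - q‖ := by
        gcongr
        · exact norm_mul_le_of_le hy le_rfl
        · exact norm_mul_le_of_le le_rfl hq.norm_le_one
    _ = 4 * ‖y - q‖ := by ring

theorem IsProjection.norm_mul_sub_le {B : Type*} [NonUnitalCStarAlgebra B] {p : B}
    (hp : IsProjection p) (x : B) : ‖p * x - x‖ ≤ ‖x‖ := by
  have hcompl : ‖1 - (p : Unitization ℂ B)‖ ≤ 1 :=
    (isProjection_iff_isStarProjection.mp hp).inr.one_sub.norm_le
  calc ‖p * x - x‖ = ‖(1 - (p : Unitization ℂ B)) * x‖ := by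
        rw [norm_sub_rev, sub_mul, one_mul, ← Unitization.inr_mul, ← Unitization.inr_sub,
          Unitization.norm_inr]
    _ ≤ 1 * ‖(x : Unitization ℂ B)‖ := norm_mul_le_of_le hcompl le_rfl
    _ = ‖x‖ := by rw [one_mul, Unitization.norm_inr]

end NormEstimates

section Cutoff

variable {δ : ℝ}

/-- The indicator function of `{t | δ ≤ |t|}`. When it is continuous on the spectrum of a
self-adjoint element `a`, the element `cfcₙ (cutoff δ) a` is the spectral projection of `a` that
removes the spectrum in `(-δ, δ)`. -/
noncomputable def cutoff (δ : ℝ) : ℝ → ℝ := fun t ↦ if δ ≤ |t| then 1 else 0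

theorem cutoff_zero (hδ : 0 < δ) : cutoff δ 0 = 0 := by simp [cutoff, hδ]

theorem continuousOn_cutoff {s : Set ℝ} (hs : ∀ t ∈ s, |t| ≠ δ) : ContinuousOn (cutoff δ) s := by
  refine ContinuousOn.if (fun t ht ↦ ?_) continuousOn_const continuousOn_const
  exact (hs t ht.1 (frontier_le_subset_eq continuous_const continuous_abs ht.2).symm).elim

theorem abs_cutoff_mul_self_sub_self_le (hδ : 0 ≤ δ) (t : ℝ) : |cutoff δ t * t - t| ≤ δ := by
  by_cases ht : δ ≤ |t|
  · simpa [cutoff, ht] using hδ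
  · simpa [cutoff, ht] using (not_le.mp ht).le

theorem abs_cutoff_half_sub_self_le (t : ℝ) : |cutoff (1 / 2) t - t| ≤ 2 * |t * t - t| := by
  have hfactor : |t * t - t| = |t| * |1 - t| := by rw [← abs_mul, ← abs_neg]; ring_nf
  rw [hfactor]
  by_cases ht : 1 / 2 ≤ |t|
  · simp only [cutoff, ht, if_true]
    nlinarith [abs_nonneg (1 - t)]
  · have hone_sub : 1 / 2 ≤ |1 - t| := by linarith [le_abs_self (1 - t), le_abs_self t]
    simp only [cutoff, ht, if_false, zero_sub, abs_neg]
    nlinarith [abs_nonneg t]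

end Cutoff

section SpectralProjection

variable {B : Type*} [NonUnitalCStarAlgebra B] {a b q y : B} {δ : ℝ}

theorem isProjection_cfcₙ_cutoff (hδ : 0 < δ) (ha : IsSelfAdjoint a)
    (hcont : ContinuousOn (cutoff δ) (quasispectrum ℝ a)) :
    IsProjection (cfcₙ (cutoff δ) a) := by
  rw [isProjection_iff_isStarProjection,
    isStarProjection_iff_quasispectrum_subset_and_isSelfAdjoint,
    cfcₙ_map_quasispectrum (cutoff δ) a hcont (cutoff_zero hδ)]
  refine ⟨?_, cfcₙ_predicate _ a⟩
  rintro _ ⟨t, -, rfl⟩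
  by_cases ht : δ ≤ |t| <;> simp [cutoff, ht]

theorem exists_mul_mul_eq_cfcₙ_cutoff (hδ : 0 < δ) (ha : IsSelfAdjoint a)
    (hcont : ContinuousOn (cutoff δ) (quasispectrum ℝ a)) :
    ∃ k, IsSelfAdjoint k ∧ ‖k‖ ≤ (δ ^ 2)⁻¹ ∧ a * k * a = cfcₙ (cutoff δ) a := by
  -- On the support of `cutoff δ` this is `t⁻²`; the `max` keeps it visibly continuous at `0`.
  let g : ℝ → ℝ := fun t ↦ cutoff δ t * (max δ |t| ^ 2)⁻¹
  have hmax (t : ℝ) : 0 < max δ |t| := lt_max_of_lt_left hδ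
  have hg : ContinuousOn g (quasispectrum ℝ a) :=
    hcont.mul (Continuous.inv₀ (by fun_prop) fun t ↦ (pow_pos (hmax t) 2).ne').continuousOn
  have hg_zero : g 0 = 0 := by simp only [g, cutoff_zero hδ, zero_mul]
  have hg_mul (t : ℝ) : t * g t * t = cutoff δ t := by
    by_cases ht : δ ≤ |t|
    · have ht_ne : t ≠ 0 := abs_pos.mp (hδ.trans_le ht)
      simp only [g, cutoff, ht, if_true, max_eq_right, sq_abs]
      field_simp
    · simp [g, cutoff, ht]
  refine ⟨cfcₙ g a, cfcₙ_predicate g a, norm_cfcₙ_le fun t _ ↦ ?_, ?_⟩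
  · by_cases ht : δ ≤ |t|
    · simp only [g, cutoff, ht, if_true, one_mul, norm_inv, norm_pow, Real.norm_eq_abs,
        max_eq_right, abs_abs]
      gcongr
    · simp only [g, cutoff, ht, if_false, zero_mul, norm_zero]
      positivity
  · simp only [← funext hg_mul]
    rw [cfcₙ_mul (fun t ↦ t * g t) (fun t ↦ t) a (continuousOn_id.mul hg) (zero_mul _),
      cfcₙ_mul (fun t ↦ t) g a continuousOn_id rfl hg hg_zero, cfcₙ_id' ℝ a]

theorem norm_cfcₙ_cutoff_mul_self_sub_le (hδ : 0 < δ) (ha : IsSelfAdjoint a)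
    (hcont : ContinuousOn (cutoff δ) (quasispectrum ℝ a)) :
    ‖cfcₙ (cutoff δ) a * a - a‖ ≤ δ := by
  have hcfc : cfcₙ (fun t ↦ cutoff δ t * t - t) a = cfcₙ (cutoff δ) a * a - a := by
    rw [cfcₙ_sub (fun t ↦ cutoff δ t * t) (fun t ↦ t) a (hcont.mul continuousOn_id) (mul_zero _),
      cfcₙ_mul (cutoff δ) (fun t ↦ t) a hcont (cutoff_zero hδ), cfcₙ_id' ℝ a]
  rw [← hcfc]
  exact norm_cfcₙ_le fun t _ ↦ abs_cutoff_mul_self_sub_self_le hδ.le t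

theorem abs_mul_self_sub_self_le_of_mem_quasispectrum (hy : IsSelfAdjoint y) {t : ℝ}
    (ht : t ∈ quasispectrum ℝ y) : |t * t - t| ≤ ‖y * y - y‖ := by
  have hcfc : cfcₙ (fun t : ℝ ↦ t * t - t) y = y * y - y := by
    rw [cfcₙ_sub _ _ y, cfcₙ_mul _ _ y, cfcₙ_id' ℝ y]
  exact hcfc ▸ norm_apply_le_norm_cfcₙ (fun t : ℝ ↦ t * t - t) y ht

theorem continuousOn_cutoff_half (hy : IsSelfAdjoint y) (hyy : ‖y * y - y‖ < 1 / 4) :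
    ContinuousOn (cutoff (1 / 2)) (quasispectrum ℝ y) := by
  refine continuousOn_cutoff fun t ht ht_abs ↦ ?_
  have hlt := (abs_mul_self_sub_self_le_of_mem_quasispectrum hy ht).trans_lt hyy
  rcases eq_or_eq_neg_of_abs_eq ht_abs with rfl | rfl <;> norm_num at hlt

theorem norm_cfcₙ_cutoff_half_sub_le (hy : IsSelfAdjoint y) (hyy : ‖y * y - y‖ < 1 / 4) :
    ‖cfcₙ (cutoff (1 / 2)) y - y‖ ≤ 2 * ‖y * y - y‖ := by
  have hcfc : cfcₙ (fun t ↦ cutoff (1 / 2) t - t) y = cfcₙ (cutoff (1 / 2)) y - y := by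
    rw [cfcₙ_sub (cutoff (1 / 2)) (fun t ↦ t) y (continuousOn_cutoff_half hy hyy)
      (cutoff_zero one_half_pos), cfcₙ_id' ℝ y]
  rw [← hcfc]
  refine norm_cfcₙ_le fun t ht ↦ (abs_cutoff_half_sub_self_le t).trans ?_
  gcongr
  exact abs_mul_self_sub_self_le_of_mem_quasispectrum hy ht

theorem IsProjection.exists_isProjection_mul_mul_near (hq : IsProjection q)
    (hy : IsSelfAdjoint y) (hyq : ‖y - q‖ < 1 / 16) :
    ∃ g, IsProjection (y * g * y) ∧ ‖y * g * y - q‖ ≤ 9 * ‖y - q‖ := by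
  have hyy : ‖y * y - y‖ ≤ 4 * ‖y - q‖ := hq.norm_mul_self_sub_self_le (by linarith)
  have hyy_lt : ‖y * y - y‖ < 1 / 4 := by linarith
  have hcont := continuousOn_cutoff_half hy hyy_lt
  obtain ⟨g, -, -, hg⟩ := exists_mul_mul_eq_cfcₙ_cutoff one_half_pos hy hcont
  refine ⟨g, hg ▸ isProjection_cfcₙ_cutoff one_half_pos hy hcont, ?_⟩
  calc ‖y * g * y - q‖ ≤ ‖y * g * y - y‖ + ‖y - q‖ := norm_sub_le_norm_sub_add_norm_sub ..
    _ ≤ 2 * ‖y * y - y‖ + ‖y - q‖ := by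
        rw [hg]
        gcongr
        exact norm_cfcₙ_cutoff_half_sub_le hy hyy_lt
    _ ≤ 9 * ‖y - q‖ := by linarith

end SpectralProjection

section RealRankZero

variable {B : Type*} [NonUnitalCStarAlgebra B] {a b : B}

theorem finite_quasispectrum_real (hb : (spectrum ℂ (b : Unitization ℂ B)).Finite) :
    (quasispectrum ℝ b).Finite := by
  rw [← Unitization.quasispectrum_eq_spectrum_inr' ℂ ℂ b] at hb
  rw [← quasispectrum.preimage_algebraMap ℂ (R := ℝ)]
  exact hb.preimage (FaithfulSMul.algebraMap_injective ℝ ℂ).injOn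

theorem exists_isProjection_mem_herSub_norm_mul_sub_le (ha : IsSelfAdjoint a) (hb : IsSelfAdjoint b)
    (hfin : (quasispectrum ℝ b).Finite) {δ : ℝ} (hδ : 0 < δ)
    (hab : (δ ^ 2)⁻¹ * (‖a‖ + ‖b‖) * ‖a - b‖ < 1 / 16) :
    ∃ p ∈ herSub Set.univ a, IsProjection p ∧
      ‖p * a - a‖ ≤ 9 * ((δ ^ 2)⁻¹ * (‖a‖ + ‖b‖) * ‖a - b‖) * ‖a‖ + (‖a - b‖ + δ) := by
  have hcont := hfin.continuousOn (cutoff δ)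
  obtain ⟨k, hk, hk_norm, hkq⟩ := exists_mul_mul_eq_cfcₙ_cutoff hδ hb hcont
  have hq := isProjection_cfcₙ_cutoff hδ hb hcont
  have hqb := norm_cfcₙ_cutoff_mul_self_sub_le hδ hb hcont
  set q := cfcₙ (cutoff δ) b
  have hyq : ‖a * k * a - q‖ ≤ (δ ^ 2)⁻¹ * (‖a‖ + ‖b‖) * ‖a - b‖ := by
    rw [← hkq]
    exact (norm_mul_mul_sub_mul_mul_le a b k).trans (by gcongr)
  have hy : IsSelfAdjoint (a * k * a) := by
    simpa only [ha.star_eq] using hk.conjugate a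
  obtain ⟨g, hp, hpq⟩ := hq.exists_isProjection_mul_mul_near hy (hyq.trans_lt hab)
  refine ⟨_, subset_closure ⟨k * a * g * a * k, trivial, by noncomm_ring⟩, hp, ?_⟩
  set p := a * k * a * g * (a * k * a)
  have hsplit : p * a - a = (p - q) * a + (q * (a - b) - (a - b) + (q * b - b)) := by
    noncomm_ring
  rw [hsplit]
  exact norm_add_le_of_le (norm_mul_le_of_le (hpq.trans (by gcongr)) le_rfl)
    (norm_add_le_of_le (hq.norm_mul_sub_le _) hqb)

theorem exists_isProjection_mem_herSub_norm_mul_sub_lt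
    (ha : a ∈ closure {b : B | IsSelfAdjoint b ∧ (quasispectrum ℝ b).Finite})
    {ε : ℝ} (hε : 0 < ε) :
    ∃ p ∈ herSub Set.univ a, IsProjection p ∧ ‖p * a - a‖ < ε := by
  have hsa : IsSelfAdjoint a :=
    closure_minimal (fun _ hb ↦ hb.1) (isClosed_eq continuous_star continuous_id) ha
  let δ := ε / 2
  let r : B → ℝ := fun b ↦ (δ ^ 2)⁻¹ * (‖a‖ + ‖b‖) * ‖a - b‖
  have hr : Tendsto r (𝓝 a) (𝓝 0) :=
    Continuous.tendsto' (by fun_prop) a 0 (by simp [r])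
  have herr : Tendsto (fun b ↦ 9 * r b * ‖a‖ + (‖a - b‖ + δ)) (𝓝 a) (𝓝 δ) :=
    Continuous.tendsto' (by fun_prop) a δ (by simp [r])
  obtain ⟨b, ⟨hb, hfin⟩, hrb, herrb⟩ := ((mem_closure_iff_frequently.mp ha).and_eventually
    ((hr.eventually_lt_const (by norm_num : (0 : ℝ) < 1 / 16)).and
      (herr.eventually_lt_const (half_lt_self hε)))).exists
  obtain ⟨p, hp_mem, hp, hpa⟩ :=
    exists_isProjection_mem_herSub_norm_mul_sub_le hsa hb hfin (half_pos hε) hrb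
  exact ⟨p, hp_mem, hp, hpa.trans_lt herrb⟩

theorem hasApproxUnitOfProjections_herSub [PartialOrder B] {S : Set B}
    (h : ∀ ε : ℝ, 0 < ε → ∃ p ∈ herSub S a, IsProjection p ∧ ‖p * a - a‖ < ε) :
    HasApproxUnitOfProjections (herSub S a) := by
  intro x hx _ ε hε
  obtain ⟨_, ⟨d, -, rfl⟩, hxd⟩ := Metric.mem_closure_iff.mp hx (ε / 2) (half_pos hε)
  rw [dist_eq_norm] at hxd
  obtain ⟨p, hp_mem, hp, hpa⟩ := h (ε / 2 / (‖d * a‖ + 1)) (by positivity)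
  refine ⟨p, hp_mem, hp, ?_⟩
  have hpada : ‖(p * a - a) * (d * a)‖ ≤ ε / 2 :=
    calc ‖(p * a - a) * (d * a)‖ ≤ ε / 2 / (‖d * a‖ + 1) * (‖d * a‖ + 1) :=
          norm_mul_le_of_le hpa.le (by linarith)
      _ = ε / 2 := div_mul_cancel₀ _ (by positivity)
  calc ‖p * x - x‖
      = ‖(p * (x - a * d * a) - (x - a * d * a)) + (p * a - a) * (d * a)‖ := by
        congr 1; noncomm_ring
    _ ≤ ‖x - a * d * a‖ + ε / 2 := norm_add_le_of_le (hp.norm_mul_sub_le _) hpada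
    _ < ε := by linarith

theorem SetRealRankZero.mem_closure_finite_quasispectrum {C : Set B}
    (hC : SetRealRankZero C) (haC : a ∈ C) (ha : IsSelfAdjoint a) :
    a ∈ closure {b : B | IsSelfAdjoint b ∧ (quasispectrum ℝ b).Finite} := by
  refine Metric.mem_closure_iff.mpr fun ε hε ↦ ?_
  obtain ⟨b, -, hb, hfin, hab⟩ := hC a haC ha (ε / 2) (half_pos hε)
  exact ⟨b, ⟨hb, finite_quasispectrum_real hfin⟩,
    (dist_eq_norm a b).trans_lt (hab.trans_lt (half_lt_self hε))⟩

end RealRankZero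

theorem stmt6_general {B : Type*} [NonUnitalCStarAlgebra B] [PartialOrder B] [StarOrderedRing B]
    {A C : Set B} (hAC : A ⊆ C) (hC : SetRealRankZero C) :
    InclusionRealRankZero A Set.univ := by
  intro a haA ha _
  have ha_closure := hC.mem_closure_finite_quasispectrum (hAC haA) (.of_nonneg ha)
  exact hasApproxUnitOfProjections_herSub fun ε hε ↦
    exists_isProjection_mem_herSub_norm_mul_sub_lt ha_closure hε

theorem stmt6 {B : Type*} [NonUnitalCStarAlgebra B] [PartialOrder B] [StarOrderedRing B]
    (A : NonUnitalStarSubalgebra ℂ B) (hA : IsClosed (A : Set B)) :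
    ((∃ C : NonUnitalStarSubalgebra ℂ B, IsClosed (C : Set B) ∧ (A : Set B) ⊆ (C : Set B) ∧
        SetRealRankZero (C : Set B)) →
      InclusionRealRankZero (A : Set B) (Set.univ : Set B)) ∧
    (SetRealRankZero (A : Set B) →
      InclusionRealRankZero (A : Set B) (Set.univ : Set B)) ∧
    (SetRealRankZero (Set.univ : Set B) →
      InclusionRealRankZero (A : Set B) (Set.univ : Set B)) :=
  ⟨fun ⟨_, _, hAC, hC⟩ ↦ stmt6_general hAC hC, stmt6_general subset_rfl,
    stmt6_general (Set.subset_univ _)⟩
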